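/- arXiv:2604.17198 — 2 statements merged into one kernel-verified Lean document; each statement's English description precedes it below -/
import Mathlib

section
/- Let S_1, …, S_t be finite sets of coordinate tuples with Q* = Σ_{i=1}^t |S_i| ≥ 1, let C be their summed count family, and let P ≥ 1. For 0 ≤ p < P let x̄_p = FindPartition(⌊p·Q*/P⌋) computed with respect to C. For 0 ≤ p < P−1 let n_p = Σ_{i=1}^t (the number of c ∈ S_i with x̄_p ≤lex c <lex x̄_{p+1}), and let n_{P−1} = Σ_{i=1}^t (the number of c ∈ S_i with x̄_{P−1} ≤lex c). Then for every p < P, |n_p − Q*/P| < t + 1 as rational numbers; that is, every processor's partition contains the average number of nonzeros up to an error of less than t + 1. -/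
/-!
Rank the tuples, counted with multiplicity over the sets `S i`, lexicographically. The hierarchical
search maintains the invariant `partState_inv`: the query equals the number of tuples whose prefix
precedes the chosen one plus the residual, and the residual is smaller than the number of tuples
extending the chosen prefix. At full depth (`findPartition_spec`) this says that the tuple found is
the one whose copies occupy the rank of the query. A tuple has at most `t` copies (`cnt_eq_le`), so
the number of tuples preceding `FindPartition(Q)` lies in `(Q - t, Q]`.

The search is monotone in the query (`findPartition_mono`), so the number of tuples in a half-open
lexicographic interval is the difference of the ranks of its end points. It therefore differs by
less than `t` from the difference of the two queries, which in turn differs by less than one from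
`Q*/P`. For the last interval the upper end point is replaced by the total `Q*`.
-/

noncomputable section

open scoped Classical
open Finset

namespace Nacho

/-- A prefix `p` is valid up to length `m` if its entries below `m` are within the extents. -/
def ValidPrefix {d : ℕ} (N : Fin d → ℕ) (m : ℕ) (p : Fin d → ℕ) : Prop :=
  ∀ k : Fin d, (k : ℕ) < m → p k < N k

/-- A family of cost functions only depends on the prefix below its level. -/
def PrefixDep {d : ℕ} (C : Fin d → (Fin d → ℕ) → ℕ → ℕ) : Prop :=
  ∀ (m : Fin d) (p p' : Fin d → ℕ) (x : ℕ),
    (∀ k : Fin d, (k : ℕ) < (m : ℕ) → p k = p' k) → C m p x = C m p' x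

/-- Monotone cost family. -/
def IsMonotoneFam {d : ℕ} (N : Fin d → ℕ) (C : Fin d → (Fin d → ℕ) → ℕ → ℕ) : Prop :=
  ∀ (m : Fin d) (p : Fin d → ℕ), ValidPrefix N (m : ℕ) p →
    ∀ x : ℕ, x < N m → C m p x ≤ C m p (x + 1)

/-- Zero-based cost family. -/
def IsZeroBased {d : ℕ} (N : Fin d → ℕ) (C : Fin d → (Fin d → ℕ) → ℕ → ℕ) : Prop :=
  ∀ (m : Fin d) (p : Fin d → ℕ), ValidPrefix N (m : ℕ) p → C m p 0 = 0

/-- Hierarchically consistent cost family. -/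
def IsHierConsistent {d : ℕ} (N : Fin d → ℕ) (C : Fin d → (Fin d → ℕ) → ℕ → ℕ) : Prop :=
  ∀ (m : Fin d) (h : (m : ℕ) + 1 < d) (p : Fin d → ℕ), ValidPrefix N (m : ℕ) p →
    ∀ x : ℕ, x < N m →
      C m p (x + 1)
        = C m p x + C ⟨(m : ℕ) + 1, h⟩ (Function.update p m x) (N ⟨(m : ℕ) + 1, h⟩)

/-- One step of the hierarchical search: at level `m`, pick the greatest in-range coordinate
whose cost does not exceed the residual, record it, and subtract its cost. -/
def partStep {d : ℕ} (N : Fin d → ℕ) (C : Fin d → (Fin d → ℕ) → ℕ → ℕ) (m : ℕ)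
    (st : (Fin d → ℕ) × ℕ) : (Fin d → ℕ) × ℕ :=
  if h : m < d then
    let x := Nat.findGreatest (fun y => C ⟨m, h⟩ st.1 y ≤ st.2) (N ⟨m, h⟩ - 1)
    (Function.update st.1 ⟨m, h⟩ x, st.2 - C ⟨m, h⟩ st.1 x)
  else st

/-- Partially-built coordinate and residual after the first `m` levels of `FindPartition`. -/
def partState {d : ℕ} (N : Fin d → ℕ) (C : Fin d → (Fin d → ℕ) → ℕ → ℕ) (Q : ℕ) :
    ℕ → (Fin d → ℕ) × ℕ
  | 0 => (fun _ => 0, Q)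
  | m + 1 => partStep N C m (partState N C Q m)

/-- `FindPartition` of the hierarchical search partitioning algorithm. -/
def findPartition {d : ℕ} (N : Fin d → ℕ) (C : Fin d → (Fin d → ℕ) → ℕ → ℕ) (Q : ℕ) :
    Fin d → ℕ :=
  (partState N C Q d).1

/-- Residual cost `R_m` of `FindPartition`. -/
def residual {d : ℕ} (N : Fin d → ℕ) (C : Fin d → (Fin d → ℕ) → ℕ → ℕ) (Q : ℕ) (m : ℕ) : ℕ :=
  (partState N C Q m).2

/-- Total cost of a coordinate tuple. -/
def totalCost {d : ℕ} (C : Fin d → (Fin d → ℕ) → ℕ → ℕ) (y : Fin d → ℕ) : ℕ :=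
  ∑ m : Fin d, C m y (y m)

/-- Strict lexicographic order on coordinate tuples. -/
def LexLt {d : ℕ} (x y : Fin d → ℕ) : Prop :=
  ∃ m : Fin d, (∀ k : Fin d, (k : ℕ) < (m : ℕ) → x k = y k) ∧ x m < y m

/-- Reflexive lexicographic order on coordinate tuples. -/
def LexLe {d : ℕ} (x y : Fin d → ℕ) : Prop :=
  LexLt x y ∨ x = y

/-- `Δ` bounds the cost gap between adjacent coordinates at the last level. -/
def LastLevelGapBound {d : ℕ} (N : Fin d → ℕ) (C : Fin d → (Fin d → ℕ) → ℕ → ℕ) (Δ : ℕ) :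
    Prop :=
  ∀ (hd : 0 < d) (p : Fin d → ℕ), ValidPrefix N (d - 1) p →
    ∀ x : ℕ, x < N ⟨d - 1, Nat.sub_lt hd Nat.one_pos⟩ →
      C ⟨d - 1, Nat.sub_lt hd Nat.one_pos⟩ p (x + 1)
        - C ⟨d - 1, Nat.sub_lt hd Nat.one_pos⟩ p x ≤ Δ

/-- The count cost family of a finite set of nonzero coordinates. -/
def countCost {d : ℕ} (N : Fin d → ℕ) (S : Finset ((m : Fin d) → Fin (N m))) :
    Fin d → (Fin d → ℕ) → ℕ → ℕ :=
  fun m p x =>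
    (S.filter fun c =>
      (∀ k : Fin d, (k : ℕ) < (m : ℕ) → (c k : ℕ) = p k) ∧ (c m : ℕ) < x).card

/-- The summed count family of finitely many finite sets of nonzero coordinates. -/
def summedCost {d : ℕ} (N : Fin d → ℕ) {t : ℕ}
    (S : Fin t → Finset ((m : Fin d) → Fin (N m))) :
    Fin d → (Fin d → ℕ) → ℕ → ℕ :=
  fun m p x => ∑ i, countCost N (S i) m p x

/-! ### Counting tuples with multiplicity -/

/-- The number, with multiplicity over the family `S`, of tuples satisfying `A`. -/
def cnt {d : ℕ} {N : Fin d → ℕ} {t : ℕ} (S : Fin t → Finset ((m : Fin d) → Fin (N m)))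
    (A : ((m : Fin d) → Fin (N m)) → Prop) : ℕ :=
  ∑ i, ((S i).filter A).card

section Counting

variable {d : ℕ} {N : Fin d → ℕ} {t : ℕ} (S : Fin t → Finset ((m : Fin d) → Fin (N m)))

theorem cnt_true : cnt S (fun _ => True) = ∑ i, (S i).card := by
  simp [cnt]

theorem cnt_congr {A B : ((m : Fin d) → Fin (N m)) → Prop} (h : ∀ c, A c ↔ B c) :
    cnt S A = cnt S B := by
  rw [show A = B from funext fun c => propext (h c)]

theorem cnt_mono {A B : ((m : Fin d) → Fin (N m)) → Prop} (h : ∀ c, A c → B c) :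
    cnt S A ≤ cnt S B :=
  Finset.sum_le_sum fun _ _ =>
    Finset.card_le_card (Finset.monotone_filter_right _ fun c _ => h c)

theorem cnt_false {A : ((m : Fin d) → Fin (N m)) → Prop} (h : ∀ c, ¬ A c) : cnt S A = 0 := by
  simp [cnt, h]

theorem cnt_add {A B D : ((m : Fin d) → Fin (N m)) → Prop} (hdisj : ∀ c, A c → ¬ B c)
    (h : ∀ c, D c ↔ A c ∨ B c) : cnt S D = cnt S A + cnt S B := by
  rw [cnt_congr S h]
  unfold cnt
  rw [← Finset.sum_add_distrib]
  refine Finset.sum_congr rfl fun i _ => ?_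
  rw [← Finset.card_union_of_disjoint (Finset.disjoint_filter.2 fun c _ => hdisj c),
    ← Finset.filter_or]
  congr!

/-- Each set `S i` holds a given tuple at most once. -/
theorem cnt_eq_le (p : Fin d → ℕ) : cnt S (fun c => (fun m => (c m : ℕ)) = p) ≤ t := by
  have h : ∀ i ∈ (Finset.univ : Finset (Fin t)),
      ((S i).filter fun c => (fun m => (c m : ℕ)) = p).card ≤ 1 := by
    intro i _
    rw [Finset.card_le_one]
    intro a ha b hb
    have hab := (Finset.mem_filter.1 ha).2.trans (Finset.mem_filter.1 hb).2.symm
    exact funext fun m => Fin.ext (congrFun hab m)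
  refine (Finset.sum_le_card_nsmul _ _ 1 fun i hi => ?_).trans (by simp)
  exact (le_of_eq (by congr!)).trans (h i hi)

theorem summedCost_eq_cnt (m : Fin d) (p : Fin d → ℕ) (x : ℕ) :
    summedCost N S m p x =
      cnt S (fun c => (∀ k : Fin d, (k : ℕ) < (m : ℕ) → (c k : ℕ) = p k) ∧ (c m : ℕ) < x) := by
  unfold summedCost countCost cnt
  congr!

/-! ### The invariant of the hierarchical search -/

/-- `c` agrees with `p` in the coordinates below `m`. -/
def Agree (p : Fin d → ℕ) (m : ℕ) (c : (m : Fin d) → Fin (N m)) : Prop :=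
  ∀ k : Fin d, (k : ℕ) < m → (c k : ℕ) = p k

/-- The prefix of `c` of length `m` strictly precedes that of `p`. -/
def Below (p : Fin d → ℕ) (m : ℕ) (c : (m : Fin d) → Fin (N m)) : Prop :=
  ∃ j : Fin d, (j : ℕ) < m ∧ Agree p j c ∧ (c j : ℕ) < p j

theorem agree_update (p : Fin d → ℕ) (m : Fin d) (x l : ℕ) (hl : l ≤ m)
    (c : (m : Fin d) → Fin (N m)) : Agree (Function.update p m x) l c ↔ Agree p l c := by
  refine forall_congr' fun k => imp_congr_right fun hk => ?_
  rw [Function.update_of_ne (Fin.ne_of_val_ne (by omega))]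

theorem agree_succ_update (p : Fin d → ℕ) (m : Fin d) (x : ℕ) (c : (m : Fin d) → Fin (N m)) :
    Agree (Function.update p m x) (m + 1) c ↔ Agree p m c ∧ (c m : ℕ) = x := by
  rw [← agree_update p m x m le_rfl c]
  constructor
  · intro h
    exact ⟨fun k hk => h k (by omega), by simpa using h m (by omega)⟩
  · rintro ⟨h, hx⟩ k hk
    rcases Nat.lt_succ_iff_lt_or_eq.1 hk with h1 | h1
    · exact h k h1
    · obtain rfl := Fin.ext h1
      simpa using hx

theorem below_succ_update (p : Fin d → ℕ) (m : Fin d) (x : ℕ) (c : (m : Fin d) → Fin (N m)) :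
    Below (Function.update p m x) (m + 1) c ↔ Below p m c ∨ (Agree p m c ∧ (c m : ℕ) < x) := by
  constructor
  · rintro ⟨j, hj, ha, hlt⟩
    rw [agree_update p m x j (by omega)] at ha
    rcases Nat.lt_succ_iff_lt_or_eq.1 hj with h1 | h1
    · rw [Function.update_of_ne (Fin.ne_of_val_ne (by omega))] at hlt
      exact Or.inl ⟨j, h1, ha, hlt⟩
    · obtain rfl := Fin.ext h1
      exact Or.inr ⟨ha, by simpa using hlt⟩
  · rintro (⟨j, hj, ha, hlt⟩ | ⟨ha, hlt⟩)
    · refine ⟨j, by omega, (agree_update p m x j (by omega) c).2 ha, ?_⟩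
      rwa [Function.update_of_ne (Fin.ne_of_val_ne (by omega))]
    · exact ⟨m, by omega, (agree_update p m x m le_rfl c).2 ha, by simpa using hlt⟩

/-- Loop invariant of `FindPartition`: after `m` levels the query splits as the number of tuples
whose prefix precedes the chosen one plus the residual, and the residual is less than the number
of tuples extending the chosen prefix. -/
theorem partState_inv {Q : ℕ} (hQ : Q < ∑ i, (S i).card) (m : ℕ)
    (hm : m ≤ d) :
    cnt S (Below (partState N (summedCost N S) Q m).1 m) +
        (partState N (summedCost N S) Q m).2 = Q ∧
      (partState N (summedCost N S) Q m).2 <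
        cnt S (Agree (partState N (summedCost N S) Q m).1 m) := by
  induction m with
  | zero =>
    refine ⟨?_, ?_⟩
    · rw [cnt_false S (by rintro c ⟨j, hj, -⟩; omega)]
      simp [partState]
    · rw [cnt_congr S (B := fun _ => True) (by simp [Agree]), cnt_true]
      exact hQ
  | succ m ih =>
    obtain ⟨h1, h2⟩ := ih (by omega)
    have hmd : m < d := hm
    simp only [partState, partStep, hmd, dite_true]
    generalize partState N (summedCost N S) Q m = st at h1 h2 ⊢
    obtain ⟨p, R⟩ := st
    simp only at h1 h2 ⊢
    set f : Fin d := ⟨m, hmd⟩ with hf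
    set x := Nat.findGreatest (fun y => summedCost N S f p y ≤ R) (N f - 1) with hx
    have hC : ∀ y, summedCost N S f p y = cnt S (fun c => Agree p m c ∧ (c f : ℕ) < y) :=
      fun y => summedCost_eq_cnt S f p y
    have hle : summedCost N S f p x ≤ R := by
      refine Nat.findGreatest_spec (P := fun y => summedCost N S f p y ≤ R)
        (Nat.zero_le _) ?_
      rw [hC, cnt_false S (by simp)]
      exact Nat.zero_le _
    have hgt : R < summedCost N S f p (x + 1) := by
      by_cases hxN : x + 1 ≤ N f - 1
      · exact not_le.1 (Nat.findGreatest_is_greatest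
          (P := fun y => summedCost N S f p y ≤ R) (Nat.lt_succ_self _) hxN)
      -- Otherwise `x + 1` is the full extent: every tuple extending the prefix is counted.
      · refine h2.trans_le ?_
        rw [hC]
        refine cnt_mono S fun c hc => ⟨hc, ?_⟩
        have := (c f).isLt
        omega
    have hB : cnt S (Below (Function.update p f x) (m + 1)) =
        cnt S (Below p m) + summedCost N S f p x := by
      rw [hC]
      refine cnt_add S ?_ (below_succ_update p f x)
      rintro c ⟨j, hj, -, hlt⟩ ⟨ha, -⟩
      have := ha j hj
      omega
    have hA : summedCost N S f p (x + 1) =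
        summedCost N S f p x + cnt S (Agree (Function.update p f x) (m + 1)) := by
      rw [hC, hC]
      refine cnt_add S ?_ ?_
      · intro c hc ha
        have := ((agree_succ_update p f x c).1 ha).2
        omega
      · intro c
        have := agree_succ_update p f x c
        simp only [hf] at this ⊢
        rw [this, ← and_or_left, Nat.lt_succ_iff_lt_or_eq]
    omega

/-- The query lies in the block of ranks occupied by the copies of the tuple found. -/
theorem findPartition_spec {Q : ℕ} (hQ : Q < ∑ i, (S i).card) :
    cnt S (fun c => LexLt (fun m => (c m : ℕ)) (findPartition N (summedCost N S) Q)) ≤ Q ∧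
      Q < cnt S (fun c => LexLt (fun m => (c m : ℕ)) (findPartition N (summedCost N S) Q)) +
        cnt S (fun c => (fun m => (c m : ℕ)) = findPartition N (summedCost N S) Q) := by
  obtain ⟨h1, h2⟩ := partState_inv S hQ d le_rfl
  have e1 : cnt S (Below (partState N (summedCost N S) Q d).1 d) =
      cnt S (fun c => LexLt (fun m => (c m : ℕ)) (findPartition N (summedCost N S) Q)) :=
    cnt_congr S fun c => by simp [Below, LexLt, Agree, findPartition]
  have e2 : cnt S (Agree (partState N (summedCost N S) Q d).1 d) =
      cnt S (fun c => (fun m => (c m : ℕ)) = findPartition N (summedCost N S) Q) :=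
    cnt_congr S fun c => by simp [Agree, findPartition, funext_iff]
  omega

end Counting

/-! ### Lexicographic order and monotonicity of the search -/

theorem LexLt.irrefl {d : ℕ} (x : Fin d → ℕ) : ¬ LexLt x x := by
  rintro ⟨m, -, h⟩
  exact lt_irrefl _ h

theorem LexLt.trans {d : ℕ} {x y z : Fin d → ℕ} (h : LexLt x y) (h' : LexLt y z) :
    LexLt x z := by
  obtain ⟨m, hm, hlt⟩ := h
  obtain ⟨n, hn, hlt'⟩ := h'
  rcases lt_trichotomy (m : ℕ) n with hmn | hmn | hmn
  · exact ⟨m, fun k hk => (hm k hk).trans (hn k (hk.trans hmn)), hn m hmn ▸ hlt⟩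
  · obtain rfl := Fin.ext hmn
    exact ⟨m, fun k hk => (hm k hk).trans (hn k hk), hlt.trans hlt'⟩
  · exact ⟨n, fun k hk => (hm k (hk.trans hmn)).trans (hn k hk), (hm n hmn).symm ▸ hlt'⟩

theorem LexLt.or_lexLe {d : ℕ} (x y : Fin d → ℕ) : LexLt x y ∨ LexLe y x := by
  by_cases hxy : x = y
  · exact Or.inr (Or.inr hxy.symm)
  have hex : ∃ n : ℕ, ∃ h : n < d, x ⟨n, h⟩ ≠ y ⟨n, h⟩ := by
    obtain ⟨m, hm⟩ := Function.ne_iff.1 hxy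
    exact ⟨m, m.isLt, hm⟩
  -- The least coordinate at which the tuples differ decides the order.
  obtain ⟨h, hne⟩ := Nat.find_spec hex
  have hmin : ∀ k : Fin d, (k : ℕ) < Nat.find hex → x k = y k := by
    intro k hk
    by_contra hk'
    exact Nat.find_min hex hk ⟨k.isLt, hk'⟩
  rcases lt_or_gt_of_ne hne with hlt | hlt
  · exact Or.inl ⟨⟨_, h⟩, hmin, hlt⟩
  · exact Or.inr (Or.inl ⟨⟨_, h⟩, fun k hk => (hmin k hk).symm, hlt⟩)

theorem LexLe.not_lexLt {d : ℕ} {x y : Fin d → ℕ} (h : LexLe x y) : ¬ LexLt y x := by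
  intro h'
  rcases h with h | rfl
  · exact LexLt.irrefl _ (h.trans h')
  · exact LexLt.irrefl _ h'

theorem LexLt.trans_lexLe {d : ℕ} {x y z : Fin d → ℕ} (h : LexLt x y) (h' : LexLe y z) :
    LexLt x z := by
  rcases h' with h' | rfl
  · exact h.trans h'
  · exact h

/-- `FindPartition` is monotone in the query: were the tuple for the larger query smaller, all of
its copies would precede the other tuple, pushing the larger query below the smaller one. -/
theorem findPartition_mono {d : ℕ} {N : Fin d → ℕ} {t : ℕ}
    (S : Fin t → Finset ((m : Fin d) → Fin (N m))) {Q Q' : ℕ} (hQQ : Q ≤ Q')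
    (hQ' : Q' < ∑ i, (S i).card) :
    LexLe (findPartition N (summedCost N S) Q) (findPartition N (summedCost N S) Q') := by
  rcases LexLt.or_lexLe (findPartition N (summedCost N S) Q')
    (findPartition N (summedCost N S) Q) with h | h
  · exfalso
    obtain ⟨h1, -⟩ := findPartition_spec S (hQQ.trans_lt hQ')
    obtain ⟨-, h2⟩ := findPartition_spec S hQ'
    rw [← cnt_add S (D := fun c => LexLe (fun m => (c m : ℕ))
      (findPartition N (summedCost N S) Q'))
      (fun c hc he => LexLt.irrefl _ (he ▸ hc)) (fun c => Iff.rfl)] at h2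
    have h3 := cnt_mono S
      (A := fun c => LexLe (fun m => (c m : ℕ)) (findPartition N (summedCost N S) Q'))
      (B := fun c => LexLt (fun m => (c m : ℕ)) (findPartition N (summedCost N S) Q))
      (by
        rintro c (hc | hc)
        · exact hc.trans h
        · exact hc ▸ h)
    omega
  · exact h

/-! ### Load balance -/

/-- with equally spaced queries `⌊p·Q*/P⌋`, every processor's interval of the
iteration space contains the average number `Q*/P` of nonzeros up to an error of less
than `t + 1`. -/
theorem stmt13 {d : ℕ} (hd : 0 < d) {N : Fin d → ℕ} (hN : ∀ m, 1 ≤ N m)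
    {t : ℕ} (S : Fin t → Finset ((m : Fin d) → Fin (N m)))
    (hQstar : 1 ≤ ∑ i, (S i).card) (P : ℕ) (hP : 1 ≤ P) :
    ∀ p : ℕ, p < P →
      |((if p + 1 < P then
            ∑ i, ((S i).filter fun c =>
              LexLe (findPartition N (summedCost N S) (p * (∑ j, (S j).card) / P))
                  (fun m => (c m : ℕ)) ∧
              LexLt (fun m => (c m : ℕ))
                  (findPartition N (summedCost N S) ((p + 1) * (∑ j, (S j).card) / P))).card
          else
            ∑ i, ((S i).filter fun c =>
              LexLe (findPartition N (summedCost N S) (p * (∑ j, (S j).card) / P))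
                  (fun m => (c m : ℕ))).card : ℕ) : ℚ)
          - ((∑ j, (S j).card : ℕ) : ℚ) / (P : ℚ)|
        < (t : ℚ) + 1 := by
  intro p hp
  set Qs := ∑ j, (S j).card with hQs
  have hlt : ∀ q, q < P → q * Qs / P < Qs := fun q hq =>
    Nat.div_lt_of_lt_mul (Nat.mul_lt_mul_of_pos_right hq hQstar)
  have hspec : ∀ q, q < P →
      cnt S (fun c => LexLt (fun m => (c m : ℕ))
          (findPartition N (summedCost N S) (q * Qs / P))) ≤ q * Qs / P ∧
        q * Qs / P < cnt S (fun c => LexLt (fun m => (c m : ℕ))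
          (findPartition N (summedCost N S) (q * Qs / P))) + t := fun q hq => by
    have h := findPartition_spec S (hlt q hq)
    have h' := cnt_eq_le S (findPartition N (summedCost N S) (q * Qs / P))
    omega
  have hP0 : (0 : ℚ) < P := by exact_mod_cast hP
  -- Consecutive queries differ from the average by less than one.
  have hfloor : ∀ q : ℕ, ((q * Qs / P : ℕ) : ℚ) ≤ q * ((Qs : ℚ) / P) ∧
      q * ((Qs : ℚ) / P) < ((q * Qs / P : ℕ) : ℚ) + 1 := by
    intro q
    rw [← mul_div_assoc]
    constructor
    · have := Nat.cast_div_le (α := ℚ) (m := q * Qs) (n := P)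
      exact_mod_cast this
    · rw [div_lt_iff₀ hP0]
      exact_mod_cast Nat.lt_mul_of_div_lt (Nat.lt_succ_self (q * Qs / P)) hP
  obtain ⟨f1, f2⟩ := hfloor p
  obtain ⟨g1, g2⟩ := hfloor (p + 1)
  obtain ⟨s1, s2⟩ := hspec p hp
  have s1' := (Nat.cast_le (α := ℚ)).2 s1
  have s2' := (Nat.cast_lt (α := ℚ)).2 s2
  rw [Nat.cast_add] at s2'
  rw [Nat.cast_succ] at g1 g2
  split_ifs with hp1
  · obtain ⟨u1, u2⟩ := hspec (p + 1) hp1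
    have u1' := (Nat.cast_le (α := ℚ)).2 u1
    have u2' := (Nat.cast_lt (α := ℚ)).2 u2
    have hab := findPartition_mono S
      (Nat.div_le_div_right (Nat.mul_le_mul_right Qs p.le_succ)) (hlt (p + 1) hp1)
    have key := cnt_add S
      (A := fun c => LexLt (fun m => (c m : ℕ))
        (findPartition N (summedCost N S) (p * Qs / P)))
      (B := fun c => LexLe (findPartition N (summedCost N S) (p * Qs / P))
          (fun m => (c m : ℕ)) ∧
        LexLt (fun m => (c m : ℕ)) (findPartition N (summedCost N S) ((p + 1) * Qs / P)))
      (D := fun c => LexLt (fun m => (c m : ℕ))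
        (findPartition N (summedCost N S) ((p + 1) * Qs / P)))
      (fun c hc hc' => hc'.1.not_lexLt hc)
      (fun c => ⟨fun hc => (LexLt.or_lexLe _ _).imp_right fun h => ⟨h, hc⟩,
        fun hc => hc.elim (fun h => h.trans_lexLe hab) fun h => h.2⟩)
    have key' := congrArg (Nat.cast (R := ℚ)) key
    rw [Nat.cast_add] at key' u2'
    refine lt_of_eq_of_lt (b := |((cnt S (fun c =>
        LexLe (findPartition N (summedCost N S) (p * Qs / P)) (fun m => (c m : ℕ)) ∧
        LexLt (fun m => (c m : ℕ)) (findPartition N (summedCost N S) ((p + 1) * Qs / P))) :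
          ℕ) : ℚ) - (Qs : ℚ) / P|) (by unfold cnt; congr!) ?_
    rw [abs_lt]
    constructor <;> linarith
  · have hPp : P = p + 1 := by omega
    have hr : ((p : ℚ) + 1) * ((Qs : ℚ) / P) = Qs := by
      rw [hPp] at hP0 ⊢
      push_cast at hP0 ⊢
      field_simp
    have key := cnt_add S
      (A := fun c => LexLt (fun m => (c m : ℕ))
        (findPartition N (summedCost N S) (p * Qs / P)))
      (B := fun c => LexLe (findPartition N (summedCost N S) (p * Qs / P))
          (fun m => (c m : ℕ)))
      (D := fun _ => True)
      (fun c hc hc' => hc'.not_lexLt hc)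
      (fun c => ⟨fun _ => LexLt.or_lexLe _ _, fun _ => trivial⟩)
    rw [cnt_true, ← hQs] at key
    have key' := congrArg (Nat.cast (R := ℚ)) key
    rw [Nat.cast_add] at key'
    refine lt_of_eq_of_lt (b := |((cnt S (fun c =>
        LexLe (findPartition N (summedCost N S) (p * Qs / P)) (fun m => (c m : ℕ))) :
          ℕ) : ℚ) - (Qs : ℚ) / P|) (by unfold cnt; congr!) ?_
    rw [abs_lt]
    constructor <;> linarith

end Nacho
end
end

section
/- (Broadcast dimension insertion) Let C be a monotone, zero-based, hierarchically consistent cost family on d dimensions with extents N, and fix s with 1 ≤ s ≤ d−1 and K ≥ 1. Define a family C' on d+1 dimensions with extents N'_l = N_l for l < s, N'_s = K, and N'_l = N_{l−1} for l > s, by: C'_l(x | p) = K · C_l(x | p) for l < s; C'_s(x | x_0, …, x_{s−1}) = x · C_s(N s | x_0, …, x_{s−1}); and C'_l(x | x_0, …, x_{s−1}, y, x_s, …, x_{l−2}) = C_{l−1}(x | x_0, …, x_{l−2}) for l > s (the inserted broadcast coordinate y is ignored). Then C' is a monotone, zero-based, hierarchically consistent cost family on d+1 dimensions. -/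
/-!
Deleting the broadcast entry with `squash` turns a prefix valid for the new extents into one valid
for the old extents (`ValidPrefix.squash_of_le`, `ValidPrefix.squash_of_lt`). Each level of the new
family is therefore an old cost function at a valid prefix, up to the factor `K` below level `s` and
up to linearity at level `s`. Prefix dependence, monotonicity and the value at zero are inherited
levelwise.

Hierarchical consistency follows by commuting `squash` with the update of one entry. Below `s - 1`
it is `K` times the old identity. At `s - 1` the child is the broadcast level, whose full cost is
`K * C_s(N s)`, which is again `K` times the old increment. At `s` the increment of
`x * C_s(N s)` is one copy of `C_s(N s)`, the full cost of the child, since `squash` forgets the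
broadcast coordinate. Above `s` it is the old identity one level down.
-/

noncomputable section

open scoped Classical
open Finset

namespace Nacho

/-- Extents after inserting a broadcast dimension of extent `K` at position `s`. -/
def bcExt {d : ℕ} (hd : 0 < d) (N : Fin d → ℕ) (s : ℕ) (hs2 : s ≤ d - 1) (K : ℕ) :
    Fin (d + 1) → ℕ := fun l =>
  if h : (l : ℕ) < s then N ⟨(l : ℕ), by omega⟩
  else if h2 : (l : ℕ) = s then K
  else N ⟨(l : ℕ) - 1, by have := l.isLt; omega⟩

/-- Remove the coordinate at the inserted broadcast position `s` from a prefix. -/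
def squash {d : ℕ} (s : ℕ) (p : Fin (d + 1) → ℕ) : Fin d → ℕ := fun k =>
  if (k : ℕ) < s then p ⟨(k : ℕ), by have := k.isLt; omega⟩
  else p ⟨(k : ℕ) + 1, by have := k.isLt; omega⟩

/-- Cost family after inserting a broadcast dimension of extent `K` at position `s`:
levels below `s` are scaled by `K`, the broadcast level scales linearly with its
coordinate, and levels above `s` ignore the inserted broadcast coordinate. -/
def bcCost {d : ℕ} (hd : 0 < d) (N : Fin d → ℕ) (C : Fin d → (Fin d → ℕ) → ℕ → ℕ)
    (s : ℕ) (hs1 : 1 ≤ s) (hs2 : s ≤ d - 1) (K : ℕ) :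
    Fin (d + 1) → (Fin (d + 1) → ℕ) → ℕ → ℕ := fun l p x =>
  if h : (l : ℕ) < s then K * C ⟨(l : ℕ), by omega⟩ (squash s p) x
  else if h2 : (l : ℕ) = s then x * C ⟨s, by omega⟩ (squash s p) (N ⟨s, by omega⟩)
  else C ⟨(l : ℕ) - 1, by have := l.isLt; omega⟩ (squash s p) x

theorem ValidPrefix.squash_of_le {d : ℕ} {hd : 0 < d} {N : Fin d → ℕ} {s : ℕ} {hs2 : s ≤ d - 1}
    {K m : ℕ} {p : Fin (d + 1) → ℕ} (hp : ValidPrefix (bcExt hd N s hs2 K) m p) (hm : m ≤ s) :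
    ValidPrefix N m (squash s p) := by
  intro k hk
  have h := hp ⟨k, by omega⟩ hk
  have hks : (k : ℕ) < s := by omega
  simpa [bcExt, squash, hks] using h

/-- Above the broadcast level the squashed prefix is one entry shorter. -/
theorem ValidPrefix.squash_of_lt {d : ℕ} {hd : 0 < d} {N : Fin d → ℕ} {s : ℕ} {hs2 : s ≤ d - 1}
    {K m : ℕ} {p : Fin (d + 1) → ℕ} (hp : ValidPrefix (bcExt hd N s hs2 K) m p) (hm : s < m) :
    ValidPrefix N (m - 1) (squash s p) := by
  intro k hk
  by_cases hks : (k : ℕ) < s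
  · have h := hp ⟨k, by omega⟩ (show (k : ℕ) < m by omega)
    simpa [bcExt, squash, hks] using h
  · have h := hp ⟨k + 1, by omega⟩ (show (k : ℕ) + 1 < m by omega)
    have h1 : ¬ (k : ℕ) + 1 < s := by omega
    have h2 : (k : ℕ) + 1 ≠ s := by omega
    simpa [bcExt, squash, hks, h1, h2] using h

theorem squash_update_of_lt {d s : ℕ} (hs : s ≤ d) (p : Fin (d + 1) → ℕ) (l : Fin (d + 1)) (x : ℕ)
    (hl : (l : ℕ) < s) :
    squash s (Function.update p l x) = Function.update (squash s p) ⟨l, by omega⟩ x := by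
  funext k
  simp only [squash, Function.update_apply, Fin.ext_iff]
  split_ifs <;> first | rfl | omega

/-- The entry at the inserted position is discarded by `squash`. -/
theorem squash_update_self {d s : ℕ} (p : Fin (d + 1) → ℕ) (l : Fin (d + 1)) (x : ℕ)
    (hl : (l : ℕ) = s) :
    squash s (Function.update p l x) = squash s p := by
  funext k
  simp only [squash, Function.update_apply, Fin.ext_iff]
  split_ifs <;> first | rfl | omega

theorem squash_update_of_gt {d s : ℕ} (p : Fin (d + 1) → ℕ) (l : Fin (d + 1)) (x : ℕ)
    (hl : s < (l : ℕ)) :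
    squash s (Function.update p l x) = Function.update (squash s p) ⟨l - 1, by omega⟩ x := by
  funext k
  simp only [squash, Function.update_apply, Fin.ext_iff]
  split_ifs <;> first | rfl | omega

/-- broadcast dimension insertion: inserting a broadcast dimension of
extent `K ≥ 1` at position `1 ≤ s ≤ d - 1` into a monotone, zero-based, hierarchically
consistent cost family yields a monotone, zero-based, hierarchically consistent cost
family on `d + 1` dimensions. -/
theorem stmt17 {d : ℕ} (hd : 0 < d) {N : Fin d → ℕ} (hN : ∀ m, 1 ≤ N m)
    (C : Fin d → (Fin d → ℕ) → ℕ → ℕ) (hPD : PrefixDep C)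
    (hMono : IsMonotoneFam N C) (hZero : IsZeroBased N C) (hHC : IsHierConsistent N C)
    (s : ℕ) (hs1 : 1 ≤ s) (hs2 : s ≤ d - 1) (K : ℕ) (hK : 1 ≤ K) :
    PrefixDep (bcCost hd N C s hs1 hs2 K) ∧
    IsMonotoneFam (bcExt hd N s hs2 K) (bcCost hd N C s hs1 hs2 K) ∧
    IsZeroBased (bcExt hd N s hs2 K) (bcCost hd N C s hs1 hs2 K) ∧
    IsHierConsistent (bcExt hd N s hs2 K) (bcCost hd N C s hs1 hs2 K) := by
  refine ⟨?_, ?_, ?_, ?_⟩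
  · intro l p p' x h
    unfold bcCost
    split_ifs with h1 h2
    · congr 1
      refine hPD _ _ _ _ fun k hk => ?_
      have hk' : (k : ℕ) < l := hk
      have hks : (k : ℕ) < s := by omega
      simpa [squash, hks] using h ⟨k, by omega⟩ hk'
    · congr 1
      refine hPD _ _ _ _ fun k hk => ?_
      have hks : (k : ℕ) < s := hk
      simpa [squash, hks] using h ⟨k, by omega⟩ (show (k : ℕ) < l by omega)
    · refine hPD _ _ _ _ fun k hk => ?_
      have hk' : (k : ℕ) < (l : ℕ) - 1 := hk
      unfold squash
      split_ifs with hks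
      · exact h _ (show (k : ℕ) < l by omega)
      · exact h _ (show (k : ℕ) + 1 < l by omega)
  · intro l p hp x hx
    unfold bcCost
    unfold bcExt at hx
    split_ifs at hx ⊢ with h1 h2
    · exact Nat.mul_le_mul_left _ (hMono _ _ (hp.squash_of_le h1.le) x hx)
    · exact Nat.mul_le_mul_right _ (Nat.le_succ x)
    · exact hMono _ _ (hp.squash_of_lt (by omega)) x hx
  · intro l p hp
    unfold bcCost
    split_ifs with h1 h2
    · rw [hZero _ _ (hp.squash_of_le h1.le), mul_zero]
    · exact zero_mul _
    · exact hZero _ _ (hp.squash_of_lt (by omega))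
  · intro l hl p hp x hx
    rcases lt_trichotomy (l : ℕ) s with h1 | h1 | h1
    · have hx' : x < N ⟨l, by omega⟩ := by simpa [bcExt, h1] using hx
      have key := hHC ⟨l, by omega⟩ (show (l : ℕ) + 1 < d by omega) (squash s p)
        (hp.squash_of_le h1.le) x hx'
      have hu := squash_update_of_lt (by omega) p l x h1
      by_cases h2 : (l : ℕ) + 1 < s
      · simp only [bcCost, bcExt, h1, h2, dif_pos, hu, key]
        ring
      · -- The summand `K * C_s(N s)` is the full cost of the broadcast level.
        obtain rfl : s = (l : ℕ) + 1 := by omega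
        simp only [bcCost, bcExt, h1, lt_irrefl, dif_pos, dif_neg, not_false_eq_true, hu, key]
        ring
    · have hu := squash_update_self p l x h1
      subst h1
      simp [bcCost, bcExt, hu]
      ring
    · have hx' : x < N ⟨l - 1, by omega⟩ := by
        simpa [bcExt, h1.not_gt, h1.ne'] using hx
      have key := hHC ⟨l - 1, by omega⟩ (show (l : ℕ) - 1 + 1 < d by omega) (squash s p)
        (hp.squash_of_lt h1) x hx'
      have hu := squash_update_of_gt p l x h1
      have h2 : ¬ (l : ℕ) + 1 < s := by omega
      have h3 : (l : ℕ) + 1 ≠ s := by omega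
      have h4 : (l : ℕ) - 1 + 1 = l := by omega
      simp only [h4] at key
      simpa [bcCost, bcExt, h1.not_gt, h1.ne', h2, h3, hu] using key

end Nacho
end
end
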